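/- arXiv:2206.03465 — 3 statements merged into one kernel-verified Lean document; each statement's English description precedes it below -/
import Mathlib

section
/- Let G be a group, T a set, and let g ∈ G and t ∈ T. Then the commutator [g, t] = g·t·g^{-1}·t^{-1}, as an element of the free product G ∗ F_T, is sufficiently generic. -/
/-- The permutation matrix of a permutation `σ` of `{1,…,n}`: the 0–1 matrix whose
`(i,j)` entry is `1` exactly when `i = σ j`. -/
def permMatrix {n : ℕ} (R : Type*) [Zero R] [One R] (σ : Equiv.Perm (Fin n)) :
    Matrix (Fin n) (Fin n) R :=
  Matrix.of fun i j => if i = σ j then 1 else 0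

/-- An element `x` of the free product `G ∗ F_T` (of a group `G` with the free group on a
set `T`) is *sufficiently generic* if for every field `L` containing `ℂ`, every `n ≥ 1` and
every group homomorphism `ρ : G ∗ F_T → GL_n(L)` such that (a) each `ρ(h)`, for `h ∈ G`, is
the identity matrix or the permutation matrix of a derangement, and (b) the family of all
entries of the matrices `ρ(t')`, `t' ∈ T`, is algebraically independent over `ℂ`, the
matrix `ρ(x) − I_n` is invertible or zero. -/
def SufficientlyGeneric (G : Type*) [Group G] (T : Type*)
    (x : Monoid.Coprod G (FreeGroup T)) : Prop :=
  ∀ (L : Type*) [Field L] [Algebra ℂ L] (n : ℕ), 1 ≤ n →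
    ∀ ρ : Monoid.Coprod G (FreeGroup T) →* Matrix.GeneralLinearGroup (Fin n) L,
      (∀ h : G, ((ρ (Monoid.Coprod.inl h) : Matrix (Fin n) (Fin n) L) = 1 ∨
        ∃ σ : Equiv.Perm (Fin n), (∀ i, σ i ≠ i) ∧
          (ρ (Monoid.Coprod.inl h) : Matrix (Fin n) (Fin n) L) = permMatrix L σ)) →
      AlgebraicIndependent ℂ
        (fun p : T × Fin n × Fin n =>
          (ρ (Monoid.Coprod.inr (FreeGroup.of p.1)) : Matrix (Fin n) (Fin n) L) p.2.1 p.2.2) →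
      (IsUnit ((ρ x : Matrix (Fin n) (Fin n) L) - 1) ∨
        ((ρ x : Matrix (Fin n) (Fin n) L) - 1 = 0))

/-!
If `ρ g = 1` the commutator is trivial. Otherwise `P = ρ g` is the permutation matrix of a
derangement `σ` and, for `A = ρ t`, the matrix `P A P⁻¹ A⁻¹ - 1 = (P A - A P) P⁻¹ A⁻¹` is invertible
as soon as `det (P A - A P) ≠ 0`. Since the entries of `A` are algebraically independent, it is
enough that this determinant is a nonzero polynomial in the entries, which is visible on diagonal
matrices: on `diagonal d` it is `± ∏ i, (d (σ i) - d i)`.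
-/

lemma coe_units_commutator_sub_one {R : Type*} [Ring R] (u v : Rˣ) :
    ((u * v * u⁻¹ * v⁻¹ : Rˣ) : R) - 1 = ⁅(u : R), (v : R)⁆ * ↑u⁻¹ * ↑v⁻¹ := by
  simp [Ring.lie_def, sub_mul, mul_assoc]

lemma inv_mem_derangements {α : Type*} {σ : Equiv.Perm α} (hσ : σ ∈ derangements α) :
    σ⁻¹ ∈ derangements α :=
  fun i hi => hσ i (Equiv.Perm.inv_eq_iff_eq.mp hi).symm

-- Mathlib's `σ.permMatrix R` has its ones at the entries `(i, σ i)`, hence the inverse.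
lemma permMatrix_eq_permMatrix_inv {n : ℕ} (R : Type*) [Zero R] [One R]
    (σ : Equiv.Perm (Fin n)) : permMatrix R σ = (σ⁻¹).permMatrix R := by
  ext i j
  simp [permMatrix, PEquiv.toMatrix_apply, Equiv.symm_apply_eq]

section PermMatrix

open Matrix MvPolynomial

variable {n R S : Type*} [Fintype n] [DecidableEq n]

lemma lie_permMatrix_diagonal [Ring R] (σ : Equiv.Perm n) (d : n → R) :
    ⁅σ.permMatrix R, diagonal d⁆ = diagonal (fun i => d (σ i) - d i) * σ.permMatrix R := by
  ext i j
  by_cases h : σ i = j <;> simp [Ring.lie_def, PEquiv.toMatrix_apply, h]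

variable [CommRing R] [CommRing S]

lemma det_lie_permMatrix_diagonal (σ : Equiv.Perm n) (d : n → R) :
    (⁅σ.permMatrix R, diagonal d⁆).det = (∏ i, (d (σ i) - d i)) * Equiv.Perm.sign σ := by
  rw [lie_permMatrix_diagonal, det_mul, det_diagonal, det_permutation]

lemma det_lie_permMatrix_diagonal_ne_zero [IsDomain R] {σ : Equiv.Perm n} {d : n → R}
    (hd : ∀ i, d (σ i) ≠ d i) : (⁅σ.permMatrix R, diagonal d⁆).det ≠ 0 := by
  rw [det_lie_permMatrix_diagonal]
  have hsign : ((Equiv.Perm.sign σ : ℤ) : R) ≠ 0 :=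
    ((Equiv.Perm.sign σ).isUnit.map (Int.castRingHom R)).ne_zero
  exact mul_ne_zero (Finset.prod_ne_zero_iff.mpr fun i _ => sub_ne_zero.mpr (hd i)) hsign

lemma map_det_lie_permMatrix (f : R →+* S) (σ : Equiv.Perm n) (A : Matrix n n R) :
    f (⁅σ.permMatrix R, A⁆).det = (⁅σ.permMatrix S, f.mapMatrix A⁆).det := by
  have hσ : f.mapMatrix (σ.permMatrix R) = σ.permMatrix S := PEquiv.map_toMatrix f σ.toPEquiv
  rw [RingHom.map_det, Ring.lie_def, map_sub, map_mul, map_mul, hσ, Ring.lie_def]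

variable [Algebra R S]

lemma aeval_det_lie_permMatrix_mvPolynomialX (σ : Equiv.Perm n) (A : Matrix n n S) :
    aeval (fun p : n × n => A p.1 p.2)
        (⁅σ.permMatrix (MvPolynomial (n × n) R), mvPolynomialX n n R⁆).det =
      (⁅σ.permMatrix S, A⁆).det := by
  conv_rhs => rw [← mvPolynomialX_mapMatrix_aeval R A]
  exact map_det_lie_permMatrix (R := MvPolynomial (n × n) R)
    (aeval fun p : n × n => A p.1 p.2).toRingHom σ (mvPolynomialX n n R)

lemma det_lie_permMatrix_mvPolynomialX_ne_zero [IsDomain R] {σ : Equiv.Perm n}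
    (hσ : σ ∈ derangements n) :
    (⁅σ.permMatrix (MvPolynomial (n × n) R), mvPolynomialX n n R⁆).det ≠ 0 := by
  have hdiag : (⁅σ.permMatrix (MvPolynomial n R), diagonal X⁆).det ≠ 0 :=
    det_lie_permMatrix_diagonal_ne_zero fun i hi => hσ i (X_injective hi)
  rw [← aeval_det_lie_permMatrix_mvPolynomialX (R := R)] at hdiag
  exact ne_zero_of_map hdiag

lemma det_lie_permMatrix_ne_zero_of_algebraicIndependent [IsDomain R] {σ : Equiv.Perm n}
    (hσ : σ ∈ derangements n) {A : Matrix n n S}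
    (hA : AlgebraicIndependent R fun p : n × n => A p.1 p.2) :
    (⁅σ.permMatrix S, A⁆).det ≠ 0 := by
  rw [← aeval_det_lie_permMatrix_mvPolynomialX (R := R)]
  exact fun h => det_lie_permMatrix_mvPolynomialX_ne_zero hσ (hA.eq_zero_of_aeval_eq_zero _ h)

theorem statement9_general {L : Type*} [Field L] [Algebra R L] {P A : GL n L}
    (hP : (P : Matrix n n L) = 1 ∨ ∃ σ ∈ derangements n, (P : Matrix n n L) = σ.permMatrix L)
    (hA : AlgebraicIndependent R fun p : n × n => (A : Matrix n n L) p.1 p.2) :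
    IsUnit (((P * A * P⁻¹ * A⁻¹ : GL n L) : Matrix n n L) - 1) ∨
      ((P * A * P⁻¹ * A⁻¹ : GL n L) : Matrix n n L) - 1 = 0 := by
  obtain hP | ⟨σ, hσ, hP⟩ := hP
  · right
    simp [Units.val_eq_one.mp hP]
  · left
    have : IsDomain R := hA.algebraMap_injective.isDomain
    have hlie : IsUnit ⁅(P : Matrix n n L), (A : Matrix n n L)⁆ := by
      rw [isUnit_iff_isUnit_det, isUnit_iff_ne_zero, hP]
      exact det_lie_permMatrix_ne_zero_of_algebraicIndependent hσ hA
    rw [coe_units_commutator_sub_one]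
    exact (hlie.mul P⁻¹.isUnit).mul A⁻¹.isUnit

end PermMatrix

/-- The commutator `[g, t] = g·t·g⁻¹·t⁻¹` in `G ∗ F_T` is sufficiently
generic. -/
theorem statement9 {G : Type*} [Group G] {T : Type*} (g : G) (t : T) :
    SufficientlyGeneric G T
      (Monoid.Coprod.inl g * Monoid.Coprod.inr (FreeGroup.of t) *
        (Monoid.Coprod.inl g)⁻¹ * (Monoid.Coprod.inr (FreeGroup.of t))⁻¹) := by
  intro L _ _ n _ ρ hG hT
  simp only [map_mul, map_inv]
  refine statement9_general ((hG g).imp_right ?_) (hT.comp (t, ·) (Prod.mk_right_injective t))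
  exact fun ⟨σ, hσ, hρ⟩ =>
    ⟨σ⁻¹, inv_mem_derangements hσ, hρ.trans (permMatrix_eq_permMatrix_inv L σ)⟩
end

section
/- Let M be a simple matroid with rank function r on a finite ground set E, let F be a field, let V be a finite-dimensional F-vector space, let {W_e}_{e∈E} be F-vector spaces, let T_e : V → W_e be linear maps, and let ε ≥ 0. (a) If for some c ≥ 1 the data (c, V, {W_e}, {T_e}) form an ε-approximate vector space representation of M over F, then |rank(T_S) − c·r(S)| ≤ c·|E|·ε for every S ⊆ E, where T_S : V → ⊕_{e∈S} W_e is the joint map v ↦ (T_e v)_{e∈S}. (b) Conversely, if there exists c ≥ 1 such that dim W_e = c and rank(T_e) = c for every e ∈ E, and |rank(T_S) − c·r(S)| ≤ c·ε for every S ⊆ E, then (c, V, {W_e}, {T_e}) form a 2ε-approximate vector space representation of M over F. -/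
/-- The joint map `T_S : V → ⊕_{e∈S} W_e`, `v ↦ (T_e v)_{e∈S}`. -/
def jointMap {F : Type*} [Field F] {α : Type*} {V : Type*} [AddCommGroup V] [Module F V]
    {W : α → Type*} [∀ e, AddCommGroup (W e)] [∀ e, Module F (W e)]
    (T : ∀ e, V →ₗ[F] W e) (S : Finset α) : V →ₗ[F] ((e : ↥S) → W e.1) :=
  LinearMap.pi fun e => T e.1

/-!
For (a), choose a basis `B` of `S`. Then `rank T_B` lies between `c (|B| - ε)` and `c |B|`, and each
element of `S \ B` closes a circuit with `B`, hence adds at most `c ε` to the rank. For (b), some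
linear map `S` makes the rank of `T_x - S ∘ T_{C \ {x}}` equal to `rank T_C - rank T_{C \ {x}}`. On
a circuit `r C = r (C \ {x})`, so the two rank estimates leave an error of at most `2 c ε`.
-/

open Module

section LinearAlgebra

variable {K V P Q W : Type*} [DivisionRing K] [AddCommGroup V] [Module K V]
  [AddCommGroup P] [Module K P] [AddCommGroup Q] [Module K Q] [AddCommGroup W] [Module K W]

theorem finrank_range_le_of_ker_le {f : V →ₗ[K] P} {g : V →ₗ[K] Q}
    [FiniteDimensional K (LinearMap.range g)] (h : LinearMap.ker g ≤ LinearMap.ker f) :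
    finrank K (LinearMap.range f) ≤ finrank K (LinearMap.range g) := by
  let φ : (V ⧸ LinearMap.ker g) →ₗ[K] LinearMap.range f :=
    (LinearMap.ker g).liftQ f.rangeRestrict (by rwa [LinearMap.ker_rangeRestrict])
  have φ_surjective : Function.Surjective φ := by
    rw [← LinearMap.range_eq_top, Submodule.range_liftQ, LinearMap.range_rangeRestrict]
  exact LinearMap.finrank_le_finrank_of_surjective (f := φ ∘ₗ g.quotKerEquivRange.symm.toLinearMap)
    (φ_surjective.comp g.quotKerEquivRange.symm.surjective)

theorem finrank_submodule_prod (p : Submodule K P) (q : Submodule K Q)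
    [FiniteDimensional K p] [FiniteDimensional K q] :
    finrank K (p.prod q) = finrank K p + finrank K q := by
  have h_inj : Function.Injective (p.subtype.prodMap q.subtype) :=
    p.subtype_injective.prodMap q.subtype_injective
  rw [← finrank_prod, ← LinearMap.finrank_range_of_inj h_inj, LinearMap.range_prodMap,
    p.range_subtype, q.range_subtype]

theorem exists_ker_sup_ker_sub_comp_eq_top (f : V →ₗ[K] P) (g : V →ₗ[K] Q) :
    ∃ S : P →ₗ[K] Q, LinearMap.ker f ⊔ LinearMap.ker (g - S ∘ₗ f) = ⊤ := by
  obtain ⟨s, hs⟩ := f.rangeRestrict.exists_rightInverse_of_surjective f.range_rangeRestrict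
  obtain ⟨S, hS⟩ := LinearMap.exists_extend (g ∘ₗ s)
  have f_section (y : LinearMap.range f) : f (s y) = y :=
    congrArg Subtype.val (LinearMap.congr_fun hs y)
  have S_eq (y : LinearMap.range f) : S y = g (s y) := LinearMap.congr_fun hS y
  refine ⟨S, eq_top_iff.2 fun v _ => ?_⟩
  have h_section : f (s (f.rangeRestrict v)) = f v := f_section _
  refine Submodule.mem_sup.2 ⟨v - s (f.rangeRestrict v), ?_, s (f.rangeRestrict v), ?_, by abel⟩
  · simp [h_section]
  · simpa [h_section, sub_eq_zero] using (S_eq (f.rangeRestrict v)).symm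

variable [FiniteDimensional K P] [FiniteDimensional K Q]

theorem finrank_range_le_add_of_inf_ker_le {f : V →ₗ[K] P} {g : V →ₗ[K] Q} {h : V →ₗ[K] W}
    (hker : LinearMap.ker f ⊓ LinearMap.ker g ≤ LinearMap.ker h) :
    finrank K (LinearMap.range h) ≤
      finrank K (LinearMap.range f) + finrank K (LinearMap.range g) := by
  rw [← LinearMap.ker_prod] at hker
  exact ((finrank_range_le_of_ker_le hker).trans
    (Submodule.finrank_mono (f.range_prod_le g))).trans_eq (finrank_submodule_prod _ _)

theorem exists_finrank_range_add_sub_comp_eq (f : V →ₗ[K] P) (g : V →ₗ[K] Q) :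
    ∃ S : P →ₗ[K] Q, finrank K (LinearMap.range f) + finrank K (LinearMap.range (g - S ∘ₗ f)) =
      finrank K (LinearMap.range (f.prod g)) := by
  obtain ⟨S, hS⟩ := exists_ker_sup_ker_sub_comp_eq_top f g
  have h_ker : LinearMap.ker (f.prod (g - S ∘ₗ f)) = LinearMap.ker (f.prod g) := by
    ext v
    simp +contextual [sub_eq_zero]
  refine ⟨S, ?_⟩
  rw [← finrank_submodule_prod, ← LinearMap.range_prod_eq hS]
  exact (finrank_range_le_of_ker_le h_ker.ge).antisymm (finrank_range_le_of_ker_le h_ker.le)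

end LinearAlgebra

section JointMap

variable {F α V : Type*} [Field F] [AddCommGroup V] [Module F V]
  {W : α → Type*} [∀ e, AddCommGroup (W e)] [∀ e, Module F (W e)]

/-- The rank of the joint map `T_S`, written `rank(T_S)` in the paper. -/
noncomputable abbrev jointRank (T : ∀ e, V →ₗ[F] W e) (S : Finset α) : ℕ :=
  finrank F (LinearMap.range (jointMap T S))

variable {T : ∀ e, V →ₗ[F] W e}

theorem mem_ker_jointMap {A : Finset α} {v : V} :
    v ∈ LinearMap.ker (jointMap T A) ↔ ∀ e ∈ A, T e v = 0 := by
  simp [jointMap, funext_iff]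

theorem ker_jointMap_anti {A B : Finset α} (h : A ⊆ B) :
    LinearMap.ker (jointMap T B) ≤ LinearMap.ker (jointMap T A) :=
  fun _ hv => mem_ker_jointMap.2 fun e he => mem_ker_jointMap.1 hv e (h he)

theorem ker_jointMap_insert [DecidableEq α] (x : α) (A : Finset α) :
    LinearMap.ker (jointMap T (insert x A)) =
      LinearMap.ker (jointMap T A) ⊓ LinearMap.ker (T x) := by
  ext v
  rw [Submodule.mem_inf, mem_ker_jointMap, mem_ker_jointMap, Finset.forall_mem_insert,
    LinearMap.mem_ker, and_comm]

theorem jointRank_empty : jointRank T ∅ = 0 :=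
  finrank_zero_of_subsingleton

variable [∀ e, FiniteDimensional F (W e)]

theorem jointRank_mono {A B : Finset α} (h : A ⊆ B) : jointRank T A ≤ jointRank T B :=
  finrank_range_le_of_ker_le (ker_jointMap_anti h)

theorem jointRank_le_sum (A : Finset α) : jointRank T A ≤ ∑ e ∈ A, finrank F (W e) := by
  rw [← Finset.sum_coe_sort, ← finrank_pi_fintype]
  exact Submodule.finrank_le _

variable [DecidableEq α]

theorem jointRank_insert_le {A B : Finset α} (hAB : A ⊆ B) {x : α}
    (S : ((e : ↥A) → W e.1) →ₗ[F] W x) :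
    jointRank T (insert x B) ≤
      jointRank T B + finrank F (LinearMap.range (T x - S ∘ₗ jointMap T A)) := by
  refine finrank_range_le_add_of_inf_ker_le fun v hv => ?_
  obtain ⟨hvB, hvS⟩ := Submodule.mem_inf.1 hv
  have hvA : jointMap T A v = 0 := ker_jointMap_anti hAB hvB
  have hvx : T x v = 0 := by simpa [hvA] using hvS
  exact (ker_jointMap_insert x B).ge ⟨hvB, hvx⟩

theorem exists_jointRank_add_sub_comp_eq (T : ∀ e, V →ₗ[F] W e) (x : α) (A : Finset α) :
    ∃ S : ((e : ↥A) → W e.1) →ₗ[F] W x,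
      jointRank T A + finrank F (LinearMap.range (T x - S ∘ₗ jointMap T A)) =
        jointRank T (insert x A) := by
  obtain ⟨S, hS⟩ := exists_finrank_range_add_sub_comp_eq (jointMap T A) (T x)
  have h_ker : LinearMap.ker ((jointMap T A).prod (T x)) =
      LinearMap.ker (jointMap T (insert x A)) := by
    rw [LinearMap.ker_prod, ker_jointMap_insert]
  exact ⟨S, hS.trans <|
    (finrank_range_le_of_ker_le h_ker.ge).antisymm (finrank_range_le_of_ker_le h_ker.le)⟩

end JointMap

section MatroidRank

variable {α : Type*} {r : Finset α → ℕ}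

/-- `r` is the rank function of a matroid on `α`, through the rank axioms. When `α` is infinite this
is the restriction to finite sets of the rank function of a finitary matroid. -/
structure IsMatroidRank [DecidableEq α] (r : Finset α → ℕ) : Prop where
  le_card (A : Finset α) : r A ≤ A.card
  mono ⦃A B : Finset α⦄ : A ⊆ B → r A ≤ r B
  submod (A B : Finset α) : r (A ∪ B) + r (A ∩ B) ≤ r A + r B

/-- Independence of a finite set in the matroid with rank function `r`. -/
def RankIndep (r : Finset α → ℕ) (A : Finset α) : Prop :=
  r A = A.card

/-- A circuit, that is, a minimal dependent set, of the matroid with rank function `r`. -/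
def RankCircuit (r : Finset α → ℕ) (C : Finset α) : Prop :=
  ¬ RankIndep r C ∧ ∀ D ⊂ C, RankIndep r D

theorem exists_rankCircuit_subset {A : Finset α} (hA : ¬ RankIndep r A) :
    ∃ C ⊆ A, RankCircuit r C := by
  obtain ⟨C, hCA, hC⟩ := exists_minimal_le_of_wellFoundedLT (¬ RankIndep r ·) A hA
  exact ⟨C, hCA, hC.prop, fun D hD => not_not.1 (hC.not_prop_of_lt hD)⟩

namespace IsMatroidRank

variable [DecidableEq α] (hr : IsMatroidRank r)
include hr

theorem rankIndep_empty : RankIndep r ∅ :=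
  Nat.le_zero.1 (hr.le_card ∅)

theorem rankIndep_of_subset {A B : Finset α} (hB : RankIndep r B) (hAB : A ⊆ B) :
    RankIndep r A := by
  have h_submod : r B + r (A ∩ (B \ A)) ≤ r A + r (B \ A) := by
    simpa only [Finset.union_sdiff_of_subset hAB] using hr.submod A (B \ A)
  have h_card := Finset.card_sdiff_add_card_eq_card hAB
  have h_diff := hr.le_card (B \ A)
  have h_le := hr.le_card A
  unfold RankIndep at *
  omega

theorem rank_insert_le (x : α) (A : Finset α) : r (insert x A) ≤ r A + 1 := by
  have h_submod := hr.submod {x} A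
  have h_single := hr.le_card {x}
  rw [Finset.singleton_union] at h_submod
  rw [Finset.card_singleton] at h_single
  omega

theorem rank_insert_add_le {A B : Finset α} (hAB : A ⊆ B) (x : α) :
    r (insert x B) + r A ≤ r B + r (insert x A) := by
  have h_submod := hr.submod B (insert x A)
  rw [Finset.union_insert, Finset.union_eq_left.2 hAB] at h_submod
  have h_inter : r A ≤ r (B ∩ insert x A) :=
    hr.mono (Finset.subset_inter hAB (Finset.subset_insert x A))
  omega

theorem exists_rankIndep_subset_rank_eq (S : Finset α) :
    ∃ B ⊆ S, RankIndep r B ∧ r B = r S := by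
  induction S using Finset.induction_on with
  | empty => exact ⟨∅, subset_rfl, hr.rankIndep_empty, rfl⟩
  | insert x S hx ih =>
    obtain ⟨B, hBS, hB, h_rank⟩ := ih
    have h_mono := hr.mono (Finset.subset_insert x S)
    obtain h_eq | h_lt := h_mono.eq_or_lt
    · exact ⟨B, hBS.trans (Finset.subset_insert x S), hB, h_rank.trans h_eq⟩
    · have h_card : (insert x B).card = B.card + 1 :=
        Finset.card_insert_of_notMem fun hxB => hx (hBS hxB)
      have h_submod := hr.rank_insert_add_le hBS x
      have h_step := hr.rank_insert_le x S
      have h_le := hr.le_card (insert x B)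
      unfold RankIndep at *
      exact ⟨insert x B, Finset.insert_subset_insert x hBS, by omega, by omega⟩

theorem not_rankIndep_insert {S B : Finset α} (hBS : B ⊆ S) (hB : RankIndep r B)
    (h_rank : r B = r S) {x : α} (hx : x ∈ S \ B) : ¬ RankIndep r (insert x B) := by
  obtain ⟨hxS, hxB⟩ := Finset.mem_sdiff.1 hx
  have h_card := Finset.card_insert_of_notMem hxB
  have h_le := hr.mono (Finset.insert_subset hxS hBS)
  unfold RankIndep at *
  omega

theorem exists_rankCircuit_erase_subset {B : Finset α} (hB : RankIndep r B) {x : α}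
    (hx : ¬ RankIndep r (insert x B)) : ∃ C, RankCircuit r C ∧ x ∈ C ∧ C.erase x ⊆ B := by
  obtain ⟨C, hCB, hC⟩ := exists_rankCircuit_subset hx
  refine ⟨C, hC, ?_, Finset.subset_insert_iff.1 hCB⟩
  by_contra hxC
  exact hC.1 (hr.rankIndep_of_subset hB ((Finset.subset_insert_iff_of_notMem hxC).1 hCB))

theorem rank_erase_eq {C : Finset α} (hC : RankCircuit r C) {x : α} (hx : x ∈ C) :
    r (C.erase x) = r C := by
  have h_erase : r (C.erase x) = (C.erase x).card := hC.2 _ (Finset.erase_ssubset hx)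
  have h_card := Finset.card_erase_add_one hx
  have h_mono := hr.mono (Finset.erase_subset x C)
  have h_lt : r C < C.card := (hr.le_card C).lt_of_ne hC.1
  omega

end IsMatroidRank

end MatroidRank

section ApproxRep

variable {F α V : Type*} [Field F] [DecidableEq α] [AddCommGroup V] [Module F V]
  {W : α → Type*} [∀ e, AddCommGroup (W e)] [∀ e, Module F (W e)]
  {r : Finset α → ℕ} {c : ℕ} {T : ∀ e, V →ₗ[F] W e} {ε : ℝ}

/-- The data `(c, V, W, T)` form an `ε`-approximate vector space representation of the matroid with
rank function `r`. Unlike in the paper, `c = 0` and infinite-dimensional `V` are allowed. -/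
structure IsApproxRep (r : Finset α → ℕ) (c : ℕ) (T : ∀ e, V →ₗ[F] W e) (ε : ℝ) : Prop where
  finrank_eq (e : α) : finrank F (W e) = c
  surjective (e : α) : Function.Surjective (T e)
  le_jointRank (A : Finset α) : RankIndep r A → (c : ℝ) * ((A.card : ℝ) - ε) ≤ jointRank T A
  exists_approx (C : Finset α) : RankCircuit r C → ∀ x ∈ C,
    ∃ S : ((e : ↥(C.erase x)) → W e.1) →ₗ[F] W x,
      (finrank F (LinearMap.range (T x - S ∘ₗ jointMap T (C.erase x))) : ℝ) ≤ (c : ℝ) * ε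

namespace IsApproxRep

theorem mul_nonneg (h : IsApproxRep r c T ε) (hr : IsMatroidRank r) : 0 ≤ (c : ℝ) * ε := by
  have h_empty := h.le_jointRank ∅ hr.rankIndep_empty
  rw [jointRank_empty, Finset.card_empty, Nat.cast_zero] at h_empty
  linarith

variable [∀ e, FiniteDimensional F (W e)]

theorem jointRank_le_mul_card (h : IsApproxRep r c T ε) (A : Finset α) :
    jointRank T A ≤ c * A.card := by
  simpa [h.finrank_eq, mul_comm] using jointRank_le_sum (T := T) A

theorem jointRank_insert_le_add (h : IsApproxRep r c T ε) (hr : IsMatroidRank r)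
    {A B : Finset α} (hBA : B ⊆ A) (hB : RankIndep r B) {x : α}
    (hx : ¬ RankIndep r (insert x B)) :
    (jointRank T (insert x A) : ℝ) ≤ jointRank T A + c * ε := by
  obtain ⟨C, hC, hxC, hCB⟩ := hr.exists_rankCircuit_erase_subset hB hx
  obtain ⟨S, hS⟩ := h.exists_approx C hC x hxC
  calc (jointRank T (insert x A) : ℝ)
      ≤ jointRank T A + finrank F (LinearMap.range (T x - S ∘ₗ jointMap T (C.erase x))) :=
        mod_cast jointRank_insert_le (hCB.trans hBA) S
    _ ≤ jointRank T A + c * ε := by gcongr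

theorem jointRank_union_le (h : IsApproxRep r c T ε) (hr : IsMatroidRank r)
    {B X : Finset α} (hB : RankIndep r B) (hX : ∀ x ∈ X, ¬ RankIndep r (insert x B)) :
    (jointRank T (B ∪ X) : ℝ) ≤ jointRank T B + X.card * (c * ε) := by
  induction X using Finset.induction_on with
  | empty => simp
  | insert x X hx ih =>
    have h_ih := ih fun y hy => hX y (Finset.mem_insert_of_mem hy)
    have h_step := h.jointRank_insert_le_add hr Finset.subset_union_left hB
      (hX x (Finset.mem_insert_self x X)) (A := B ∪ X)
    rw [Finset.union_insert, Finset.card_insert_of_notMem hx]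
    push_cast
    linarith

theorem jointRank_le (h : IsApproxRep r c T ε) (hr : IsMatroidRank r) (S : Finset α) :
    (jointRank T S : ℝ) ≤ c * r S + c * S.card * ε := by
  obtain ⟨B, hBS, hB, h_rank⟩ := hr.exists_rankIndep_subset_rank_eq S
  have h_nonneg := h.mul_nonneg hr
  calc (jointRank T S : ℝ)
      ≤ jointRank T B + (S \ B).card * (c * ε) := by
        simpa only [Finset.union_sdiff_of_subset hBS] using
          h.jointRank_union_le hr hB fun x => hr.not_rankIndep_insert hBS hB h_rank
    _ ≤ c * B.card + S.card * (c * ε) := by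
        gcongr
        · exact_mod_cast h.jointRank_le_mul_card B
        · exact Finset.sdiff_subset
    _ = c * r S + c * S.card * ε := by
        rw [← h_rank, show r B = B.card from hB]
        ring

theorem mul_rank_le (h : IsApproxRep r c T ε) (hr : IsMatroidRank r) (S : Finset α) :
    (c : ℝ) * r S ≤ jointRank T S + c * ε := by
  obtain ⟨B, hBS, hB, h_rank⟩ := hr.exists_rankIndep_subset_rank_eq S
  have h_indep := h.le_jointRank B hB
  have h_mono : (jointRank T B : ℝ) ≤ jointRank T S := mod_cast jointRank_mono hBS
  rw [← h_rank, show r B = B.card from hB]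
  linarith

theorem abs_jointRank_sub_le (h : IsApproxRep r c T ε) (hr : IsMatroidRank r) (S : Finset α) :
    |(jointRank T S : ℝ) - c * r S| ≤ c * S.card * ε := by
  obtain rfl | hS := S.eq_empty_or_nonempty
  · have h_rank : r ∅ = 0 := hr.rankIndep_empty
    simp [jointRank_empty, h_rank]
  · have h_card : (1 : ℝ) ≤ S.card := mod_cast hS.card_pos
    have h_error : c * ε ≤ c * S.card * ε := by
      linarith [le_mul_of_one_le_left (h.mul_nonneg hr) h_card]
    have h_upper := h.jointRank_le hr S
    have h_lower := h.mul_rank_le hr S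
    exact abs_le.2 ⟨by linarith, by linarith⟩

end IsApproxRep

variable [∀ e, FiniteDimensional F (W e)]

theorem exists_finrank_range_sub_comp_le (hr : IsMatroidRank r)
    (h : ∀ S, |(jointRank T S : ℝ) - c * r S| ≤ c * ε) {C : Finset α} (hC : RankCircuit r C)
    {x : α} (hx : x ∈ C) :
    ∃ S : ((e : ↥(C.erase x)) → W e.1) →ₗ[F] W x,
      (finrank F (LinearMap.range (T x - S ∘ₗ jointMap T (C.erase x))) : ℝ) ≤ c * (2 * ε) := by
  obtain ⟨S, hS⟩ := exists_jointRank_add_sub_comp_eq T x (C.erase x)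
  rw [Finset.insert_erase hx] at hS
  have hS_real : (jointRank T (C.erase x) : ℝ) +
      finrank F (LinearMap.range (T x - S ∘ₗ jointMap T (C.erase x))) = jointRank T C :=
    mod_cast hS
  have h_upper := (abs_le.1 (h C)).2
  have h_lower := (abs_le.1 (h (C.erase x))).1
  rw [hr.rank_erase_eq hC hx] at h_lower
  exact ⟨S, by linarith⟩

theorem isApproxRep_of_abs_jointRank_sub_le (hr : IsMatroidRank r)
    (hW : ∀ e, finrank F (W e) = c) (hT : ∀ e, finrank F (LinearMap.range (T e)) = c)
    (h : ∀ S, |(jointRank T S : ℝ) - c * r S| ≤ c * ε) : IsApproxRep r c T (2 * ε) where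
  finrank_eq := hW
  surjective e :=
    LinearMap.range_eq_top.1 (Submodule.eq_top_of_finrank_eq ((hT e).trans (hW e).symm))
  le_jointRank A hA := by
    have h_nonneg : 0 ≤ c * ε := (abs_nonneg _).trans (h A)
    have h_lower := (abs_le.1 (h A)).1
    rw [show r A = A.card from hA] at h_lower
    linarith
  exists_approx _ hC _ hx := exists_finrank_range_sub_comp_le hr h hC hx

theorem statement14_general (hr : IsMatroidRank r) (T : ∀ e, V →ₗ[F] W e) (c : ℕ) (ε : ℝ) :
    (IsApproxRep r c T ε → ∀ S : Finset α, |(jointRank T S : ℝ) - c * r S| ≤ c * S.card * ε) ∧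
      ((∀ e, finrank F (W e) = c) → (∀ e, finrank F (LinearMap.range (T e)) = c) →
        (∀ S : Finset α, |(jointRank T S : ℝ) - c * r S| ≤ c * ε) → IsApproxRep r c T (2 * ε)) :=
  ⟨fun h => h.abs_jointRank_sub_le hr, isApproxRep_of_abs_jointRank_sub_le hr⟩

end ApproxRep

/-- Let `M` be a simple matroid with rank function `r` on a finite ground
set `E`, `F` a field, `V` a finite-dimensional `F`-vector space, `T_e : V → W_e` linear
maps, and `ε ≥ 0`. (a) If for some `c ≥ 1` the data form an `ε`-approximate vector space
representation of `M`, then `|rank(T_S) − c·r(S)| ≤ c·|E|·ε` for every `S ⊆ E`.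
(b) Conversely, if `dim W_e = c` and `rank(T_e) = c` for all `e`, and
`|rank(T_S) − c·r(S)| ≤ c·ε` for every `S`, then the data form a `2ε`-approximate vector
space representation of `M`. -/
theorem statement14 {α : Type*} [Fintype α] [DecidableEq α] {F : Type*} [Field F]
    (r : Finset α → ℕ)
    (hr_le : ∀ A : Finset α, r A ≤ A.card)
    (hr_mono : ∀ ⦃A B : Finset α⦄, A ⊆ B → r A ≤ r B)
    (hr_submod : ∀ A B : Finset α, r (A ∪ B) + r (A ∩ B) ≤ r A + r B)
    (hsimple : ∀ A : Finset α, A.card ≤ 2 → r A = A.card)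
    (V : Type*) [AddCommGroup V] [Module F V] [FiniteDimensional F V]
    (W : α → Type*) [∀ e, AddCommGroup (W e)] [∀ e, Module F (W e)]
    [∀ e, FiniteDimensional F (W e)]
    (T : ∀ e, V →ₗ[F] W e) (ε : ℝ) (hε : 0 ≤ ε) :
    -- (a)
    ((∀ c : ℕ, 1 ≤ c →
        (∀ e, Module.finrank F (W e) = c) →
        (∀ e, Function.Surjective (T e)) →
        (∀ A : Finset α, r A = A.card →
          (c : ℝ) * ((A.card : ℝ) - ε) ≤
            (Module.finrank F ↥(LinearMap.range (jointMap T A)) : ℝ)) →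
        (∀ C : Finset α, r C ≠ C.card → (∀ D ⊂ C, r D = D.card) → ∀ x ∈ C,
          ∃ S : ((e : ↥(C.erase x)) → W e.1) →ₗ[F] W x,
            (Module.finrank F ↥(LinearMap.range (T x - S ∘ₗ jointMap T (C.erase x))) : ℝ) ≤
              (c : ℝ) * ε) →
        ∀ S : Finset α,
          |(Module.finrank F ↥(LinearMap.range (jointMap T S)) : ℝ) - (c : ℝ) * (r S : ℝ)| ≤
            (c : ℝ) * (Fintype.card α : ℝ) * ε)
    -- (b)
    ∧ (∀ c : ℕ, 1 ≤ c →
        (∀ e, Module.finrank F (W e) = c) →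
        (∀ e, Module.finrank F ↥(LinearMap.range (T e)) = c) →
        (∀ S : Finset α,
          |(Module.finrank F ↥(LinearMap.range (jointMap T S)) : ℝ) - (c : ℝ) * (r S : ℝ)| ≤
            (c : ℝ) * ε) →
        ((∀ e, Function.Surjective (T e)) ∧
          (∀ A : Finset α, r A = A.card →
            (c : ℝ) * ((A.card : ℝ) - 2 * ε) ≤
              (Module.finrank F ↥(LinearMap.range (jointMap T A)) : ℝ)) ∧
          (∀ C : Finset α, r C ≠ C.card → (∀ D ⊂ C, r D = D.card) → ∀ x ∈ C,
            ∃ S : ((e : ↥(C.erase x)) → W e.1) →ₗ[F] W x,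
              (Module.finrank F
                  ↥(LinearMap.range (T x - S ∘ₗ jointMap T (C.erase x))) : ℝ) ≤
                (c : ℝ) * (2 * ε))))) := by
  have hr : IsMatroidRank r := ⟨hr_le, hr_mono, hr_submod⟩
  refine ⟨fun c _ hW hT h_indep h_circuit S => ?_, fun c _ hW hT h_abs => ?_⟩
  · have h_rep : IsApproxRep r c T ε :=
      ⟨hW, hT, h_indep, fun C hC => h_circuit C hC.1 hC.2⟩
    refine ((statement14_general hr T c ε).1 h_rep S).trans ?_
    gcongr
    exact S.card_le_univ
  · have h_rep := (statement14_general hr T c ε).2 hW hT h_abs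
    exact ⟨h_rep.surjective, h_rep.le_jointRank, fun C hC hmin => h_rep.exists_approx C ⟨hC, hmin⟩⟩
end

section
/- Let M be a connected matroid of rank at least two with rank function r on a finite ground set E, and let {X_e : Ω → Ω_e}_{e∈E} together with a discrete probability measure μ on Ω be a discrete probability space representation of M. Then M is entropic: there exists a real number λ > 0 such that r(A) = λ·H(X_A) for every A ⊆ E, where H(X_A) = Σ_y −P(X_A = y)·ln P(X_A = y) is the Shannon entropy of the joint map X_A (this sum converges for every A ⊆ E). -/
/-- `P(X = y)`: the total mass, under the point masses `p`, of the fiber of `X` over `y`. -/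
noncomputable def prMass {Ω S : Type*} (p : Ω → ℝ) (X : Ω → S) (y : S) : ℝ :=
  ∑' ω : {w : Ω // X w = y}, p ω.1

/-- The Shannon entropy `H(X) = Σ_y −P(X = y)·ln P(X = y)` (with `0·ln 0 = 0`). -/
noncomputable def entropy {Ω S : Type*} (p : Ω → ℝ) (X : Ω → S) : ℝ :=
  ∑' y : S, Real.negMulLog (prMass p X y)

/-- The joint map `X_A : Ω → Π_{e∈A} Ω_e`, `ω ↦ (X_e(ω))_{e∈A}`. -/
def jointRV {α Ω : Type*} {Ωe : α → Type*} (X : ∀ e, Ω → Ωe e) (A : Finset α) :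
    Ω → ((e : ↥A) → Ωe e.1) :=
  fun ω e => X e.1 ω

/-!
Call `P(X_e = X_e(ω))` the atom of `e` at the outcome `ω`. Any two elements of a circuit `C` have
equal atoms at `ω`: for `z ∈ C` the fiber of `X_C` through `ω` is that of `X_{C∖z}`, whose mass is
the product of the atoms over `C∖z`, so the atom of `z` is the product over all of `C` divided by
the mass of this fiber. By connectedness the atom at `ω` does not depend on the element. For an
independent pair `u, v` and outcomes `ω, ω'`, some outcome agrees with `ω` at `u` and with `ω'` at
`v`, so the atom does not depend on the outcome either; by nontriviality the common value `q` is
less than `1`. Now `X_A` has the same fibers as `X_B` for a basis `B` of `A`, hence is uniform with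
atoms `q ^ r(A)` and entropy `r(A) · (-ln q)`.
-/

section PointMasses

variable {Ω S T : Type*} {p : Ω → ℝ} {m : ℝ}

theorem prMass_nonneg (hp : ∀ ω, 0 ≤ p ω) (X : Ω → S) (y : S) : 0 ≤ prMass p X y :=
  tsum_nonneg fun _ => hp _

theorem hasSum_prMass (hm : HasSum p m) (X : Ω → S) : HasSum (prMass p X) m :=
  hm.tsum_fiberwise X

theorem prMass_apply_pos (hp : ∀ ω, 0 ≤ p ω) (hs : Summable p) (X : Ω → S) {ω : Ω} (hω : 0 < p ω) :
    0 < prMass p X (X ω) :=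
  (hs.subtype {w | X w = X ω}).tsum_pos (fun _ => hp _) ⟨ω, rfl⟩ hω

theorem exists_pos_of_prMass_ne_zero (hp : ∀ ω, 0 ≤ p ω) {X : Ω → S} {y : S}
    (hy : prMass p X y ≠ 0) : ∃ ω, 0 < p ω ∧ X ω = y := by
  obtain ⟨⟨ω, hωy⟩, hω⟩ : ∃ ω : {w // X w = y}, p ω ≠ 0 := by
    by_contra! hzero
    exact hy ((tsum_congr hzero).trans tsum_zero)
  exact ⟨ω, (hp ω).lt_of_ne' hω, hωy⟩

theorem prMass_congr {X : Ω → S} {Y : Ω → T} {y : S} {z : T} (h : ∀ w, X w = y ↔ Y w = z) :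
    prMass p X y = prMass p Y z :=
  (Equiv.subtypeEquivRight h).tsum_eq fun w : {w : Ω // Y w = z} => p w

theorem prMass_apply_lt (hp : ∀ ω, 0 ≤ p ω) (hm : HasSum p m) {X : Ω → S} {ω ω' : Ω}
    (hω' : 0 < p ω') (hne : X ω ≠ X ω') : prMass p X (X ω) < m := by
  classical
  have hpair : prMass p X (X ω) + prMass p X (X ω') ≤ m := by
    rw [← Finset.sum_pair hne]
    exact sum_le_hasSum _ (fun y _ => prMass_nonneg hp X y) (hasSum_prMass hm X)
  linarith [prMass_apply_pos hp hm.summable X hω']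

theorem hasSum_negMulLog_prMass_of_uniform (hp : ∀ ω, 0 ≤ p ω) (hm : HasSum p m) {X : Ω → S}
    {c : ℝ} (hc : ∀ ω, 0 < p ω → prMass p X (X ω) = c) :
    HasSum (fun y => Real.negMulLog (prMass p X y)) (m * -Real.log c) := by
  suffices hatom : ∀ y, Real.negMulLog (prMass p X y) = prMass p X y * -Real.log c by
    simpa only [hatom] using (hasSum_prMass hm X).mul_right (-Real.log c)
  intro y
  by_cases hy : prMass p X y = 0
  · rw [hy, Real.negMulLog_zero, zero_mul]
  · obtain ⟨ω, hω, rfl⟩ := exists_pos_of_prMass_ne_zero hp hy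
    rw [hc ω hω, Real.negMulLog, neg_mul_comm]

end PointMasses

theorem jointRV_eq_iff {α Ω : Type*} {Ωe : α → Type*} {X : ∀ e, Ω → Ωe e} {A : Finset α}
    {w ω : Ω} : jointRV X A w = jointRV X A ω ↔ ∀ e ∈ A, X e w = X e ω :=
  ⟨fun h e he => congrFun h ⟨e, he⟩, fun h => funext fun e => h e e.2⟩

section RankFunctions

variable {α : Type*}

/-- Independence of a finite set in the matroid with rank function `r`. -/
def IsIndepSet (r : Finset α → ℕ) (A : Finset α) : Prop :=
  r A = A.card

/-- The circuits, i.e. minimal dependent sets, of the matroid with rank function `r`. -/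
def IsCircuitSet (r : Finset α → ℕ) (C : Finset α) : Prop :=
  ¬ IsIndepSet r C ∧ ∀ D ⊂ C, IsIndepSet r D

/-- `r` is the rank function, on finite sets, of a matroid. The ground set is the whole type and may
be infinite, in which case the matroid is the finitary one with these ranks. -/
structure IsRankFunction [DecidableEq α] (r : Finset α → ℕ) : Prop where
  le_card : ∀ A, r A ≤ A.card
  mono : Monotone r
  submod : ∀ A B, r (A ∪ B) + r (A ∩ B) ≤ r A + r B

theorem exists_isCircuitSet_subset {r : Finset α → ℕ} {A : Finset α} (hA : ¬ IsIndepSet r A) :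
    ∃ C ⊆ A, IsCircuitSet r C := by
  obtain ⟨C, hCA, hC⟩ := exists_minimal_le_of_wellFoundedLT (¬ IsIndepSet r ·) A hA
  exact ⟨C, hCA, hC.prop, fun D hD => not_not.1 (hC.not_prop_of_lt hD)⟩

namespace IsRankFunction

variable [DecidableEq α] {r : Finset α → ℕ} {A B : Finset α}

theorem isIndepSet_subset (hr : IsRankFunction r) (hB : IsIndepSet r B) (hAB : A ⊆ B) :
    IsIndepSet r A := by
  have hsubmod := hr.submod A (B \ A)
  rw [Finset.union_sdiff_of_subset hAB, hB] at hsubmod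
  have hcard := Finset.card_sdiff_add_card_eq_card hAB
  have hA := hr.le_card A
  have hdiff := hr.le_card (B \ A)
  unfold IsIndepSet
  omega

theorem exists_basis (hr : IsRankFunction r) (A : Finset α) :
    ∃ B ⊆ A, IsIndepSet r B ∧ r B = r A := by
  induction A using Finset.induction_on with
  | empty => exact ⟨∅, subset_rfl, Nat.le_zero.1 (hr.le_card ∅), rfl⟩
  | insert a A ha ih =>
    obtain ⟨B, hBA, hB, hBr⟩ := ih
    by_cases hspan : r (insert a A) = r A
    · exact ⟨B, hBA.trans (Finset.subset_insert a A), hB, hBr.trans hspan.symm⟩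
    · have hsub : insert a B ⊆ insert a A := Finset.insert_subset_insert a hBA
      have hlt : r A < r (insert a A) :=
        (hr.mono (Finset.subset_insert a A)).lt_of_ne' hspan
      have hsubmod := hr.submod A (insert a B)
      rw [Finset.union_insert, Finset.union_eq_left.2 hBA, Finset.inter_insert_of_notMem ha,
        Finset.inter_eq_right.2 hBA] at hsubmod
      have hcard := Finset.card_insert_of_notMem fun h => ha (hBA h)
      have hle := hr.le_card (insert a B)
      have hmono := hr.mono hsub
      unfold IsIndepSet at hB
      exact ⟨insert a B, hsub, by unfold IsIndepSet; omega, by omega⟩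

theorem exists_isCircuitSet_of_notMem_basis (hr : IsRankFunction r) (hBA : B ⊆ A)
    (hB : IsIndepSet r B) (hBr : r B = r A) {x : α} (hxA : x ∈ A) (hxB : x ∉ B) :
    ∃ C, IsCircuitSet r C ∧ x ∈ C ∧ C.erase x ⊆ B := by
  have hdep : ¬ IsIndepSet r (insert x B) := by
    have hmono := hr.mono (Finset.insert_subset hxA hBA)
    unfold IsIndepSet at hB ⊢
    rw [Finset.card_insert_of_notMem hxB]
    omega
  obtain ⟨C, hCB, hC⟩ := exists_isCircuitSet_subset hdep
  refine ⟨C, hC, ?_, Finset.subset_insert_iff.1 hCB⟩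
  by_contra hxC
  exact hC.1 (hr.isIndepSet_subset hB ((Finset.subset_insert_iff_of_notMem hxC).1 hCB))

theorem exists_isIndepSet_pair (hr : IsRankFunction r) (hA : 2 ≤ r A) :
    ∃ u v, u ≠ v ∧ IsIndepSet r {u, v} := by
  obtain ⟨B, -, hB, hBr⟩ := hr.exists_basis A
  obtain ⟨u, hu, v, hv, huv⟩ := Finset.one_lt_card.1 (hA.trans_eq (hBr.symm.trans hB))
  exact ⟨u, v, huv,
    hr.isIndepSet_subset hB (Finset.insert_subset hu (Finset.singleton_subset_iff.2 hv))⟩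

end IsRankFunction

end RankFunctions

/-- A discrete probability space representation, by the maps `X e` on a space with point masses `p`,
of the matroid with rank function `r`. -/
structure IsRepresentation {α Ω : Type*} [DecidableEq α] {Ωe : α → Type*} (r : Finset α → ℕ)
    (p : Ω → ℝ) (X : ∀ e, Ω → Ωe e) : Prop where
  nonneg : ∀ ω, 0 ≤ p ω
  hasSum_one : HasSum p 1
  independence : ∀ A, IsIndepSet r A → ∀ y : (e : ↥A) → Ωe e.1,
    prMass p (jointRV X A) y = ∏ e : ↥A, prMass p (X e.1) (y e)
  determination : ∀ C, IsCircuitSet r C → ∀ x ∈ C,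
    ∃ f : ((e : ↥(C.erase x)) → Ωe e.1) → Ωe x, ∀ ω, X x ω = f (jointRV X (C.erase x) ω)
  nontriviality : ∀ e, r {e} ≠ 0 → ∃ ω ω', 0 < p ω ∧ 0 < p ω' ∧ X e ω ≠ X e ω'

namespace IsRepresentation

variable {α Ω : Type*} [DecidableEq α] {Ωe : α → Type*} {r : Finset α → ℕ} {p : Ω → ℝ}
  {X : ∀ e, Ω → Ωe e} {A B C : Finset α} {w ω ω' : Ω} {x y : α}

theorem prMass_pos (hX : IsRepresentation r p X) (hω : 0 < p ω) (e : α) :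
    0 < prMass p (X e) (X e ω) :=
  prMass_apply_pos hX.nonneg hX.hasSum_one.summable (X e) hω

theorem prMass_jointRV_of_isIndepSet (hX : IsRepresentation r p X) (hA : IsIndepSet r A) (ω : Ω) :
    prMass p (jointRV X A) (jointRV X A ω) = ∏ e ∈ A, prMass p (X e) (X e ω) :=
  (hX.independence A hA _).trans (A.prod_coe_sort fun e => prMass p (X e) (X e ω))

theorem exists_agreeing_outcome (hX : IsRepresentation r p X) (hA : IsIndepSet r A) {σ : α → Ω}
    (hσ : ∀ e, 0 < p (σ e)) : ∃ w, 0 < p w ∧ ∀ e ∈ A, X e w = X e (σ e) := by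
  have hne : prMass p (jointRV X A) (fun e => X e.1 (σ e.1)) ≠ 0 := by
    rw [hX.independence A hA]
    exact (Finset.prod_pos fun e _ => hX.prMass_pos (hσ e.1) e.1).ne'
  obtain ⟨w, hw, hwσ⟩ := exists_pos_of_prMass_ne_zero hX.nonneg hne
  exact ⟨w, hw, fun e he => congrFun hwσ ⟨e, he⟩⟩

theorem apply_eq_of_isCircuitSet (hX : IsRepresentation r p X) (hC : IsCircuitSet r C)
    (hx : x ∈ C) (h : ∀ e ∈ C.erase x, X e w = X e ω) : X x w = X x ω := by
  obtain ⟨f, hf⟩ := hX.determination C hC x hx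
  rw [hf, hf, jointRV_eq_iff.2 h]

theorem jointRV_erase_eq_iff (hX : IsRepresentation r p X) (hC : IsCircuitSet r C) (hx : x ∈ C) :
    jointRV X (C.erase x) w = jointRV X (C.erase x) ω ↔ jointRV X C w = jointRV X C ω := by
  rw [jointRV_eq_iff, jointRV_eq_iff]
  refine ⟨fun h => ?_, fun h e he => h e (Finset.mem_of_mem_erase he)⟩
  rw [← Finset.insert_erase hx, Finset.forall_mem_insert]
  exact ⟨hX.apply_eq_of_isCircuitSet hC hx h, h⟩

theorem jointRV_basis_eq_iff (hX : IsRepresentation r p X) (hr : IsRankFunction r) (hBA : B ⊆ A)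
    (hB : IsIndepSet r B) (hBr : r B = r A) :
    jointRV X A w = jointRV X A ω ↔ jointRV X B w = jointRV X B ω := by
  rw [jointRV_eq_iff, jointRV_eq_iff]
  refine ⟨fun h e he => h e (hBA he), fun h x hxA => ?_⟩
  by_cases hxB : x ∈ B
  · exact h x hxB
  · obtain ⟨C, hC, hxC, hCB⟩ := hr.exists_isCircuitSet_of_notMem_basis hBA hB hBr hxA hxB
    exact hX.apply_eq_of_isCircuitSet hC hxC fun e he => h e (hCB he)

theorem prMass_mul_prMass_jointRV (hX : IsRepresentation r p X) (hC : IsCircuitSet r C)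
    (hx : x ∈ C) (ω : Ω) :
    prMass p (X x) (X x ω) * prMass p (jointRV X C) (jointRV X C ω) =
      ∏ e ∈ C, prMass p (X e) (X e ω) := by
  rw [← prMass_congr fun w => hX.jointRV_erase_eq_iff (w := w) (ω := ω) hC hx,
    hX.prMass_jointRV_of_isIndepSet (hC.2 _ (Finset.erase_ssubset hx)),
    Finset.mul_prod_erase C (fun e => prMass p (X e) (X e ω)) hx]

theorem prMass_eq_of_isCircuitSet (hX : IsRepresentation r p X) (hC : IsCircuitSet r C)
    (hx : x ∈ C) (hy : y ∈ C) (hω : 0 < p ω) :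
    prMass p (X x) (X x ω) = prMass p (X y) (X y ω) := by
  have hpos := prMass_apply_pos hX.nonneg hX.hasSum_one.summable (jointRV X C) hω
  refine mul_right_cancel₀ hpos.ne' ?_
  rw [hX.prMass_mul_prMass_jointRV hC hx, hX.prMass_mul_prMass_jointRV hC hy]

theorem prMass_eq_of_isIndepSet_pair (hX : IsRepresentation r p X) (hxy : x ≠ y)
    (hindep : IsIndepSet r {x, y})
    (hatom : ∀ ω, 0 < p ω → prMass p (X x) (X x ω) = prMass p (X y) (X y ω))
    (hω : 0 < p ω) (hω' : 0 < p ω') :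
    prMass p (X x) (X x ω) = prMass p (X x) (X x ω') := by
  obtain ⟨w, hw, hwx, hwy⟩ : ∃ w, 0 < p w ∧ X x w = X x ω ∧ X y w = X y ω' := by
    simpa [hxy.symm] using hX.exists_agreeing_outcome hindep
      (σ := fun e => if e = x then ω else ω') fun e => by split_ifs <;> assumption
  rw [← hwx, hatom w hw, hwy, hatom ω' hω']

theorem exists_prMass_eq_const (hX : IsRepresentation r p X) (hr : IsRankFunction r)
    (hconn : ∀ e e', e ≠ e' → ∃ C, IsCircuitSet r C ∧ e ∈ C ∧ e' ∈ C) (hrk : ∃ A, 2 ≤ r A) :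
    ∃ q, 0 < q ∧ q < 1 ∧ ∀ ω, 0 < p ω → ∀ e, prMass p (X e) (X e ω) = q := by
  have hatom : ∀ ω, 0 < p ω → ∀ x y, prMass p (X x) (X x ω) = prMass p (X y) (X y ω) := by
    intro ω hω x y
    obtain rfl | hxy := eq_or_ne x y
    · rfl
    · obtain ⟨C, hC, hx, hy⟩ := hconn x y hxy
      exact hX.prMass_eq_of_isCircuitSet hC hx hy hω
  obtain ⟨A, hA⟩ := hrk
  obtain ⟨u, v, huv, hindep⟩ := hr.exists_isIndepSet_pair hA
  have hu : r {u} = 1 := hr.isIndepSet_subset hindep (by simp)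
  obtain ⟨ω₀, ω₁, hω₀, hω₁, hne⟩ := hX.nontriviality u (by simp [hu])
  refine ⟨prMass p (X u) (X u ω₀), hX.prMass_pos hω₀ u,
    prMass_apply_lt hX.nonneg hX.hasSum_one hω₁ hne, fun ω hω e => (hatom ω hω e u).trans ?_⟩
  exact hX.prMass_eq_of_isIndepSet_pair huv hindep (fun w hw => hatom w hw u v) hω hω₀

theorem prMass_jointRV_eq_pow (hX : IsRepresentation r p X) (hr : IsRankFunction r) {q : ℝ}
    (hq : ∀ e, prMass p (X e) (X e ω) = q) (A : Finset α) :
    prMass p (jointRV X A) (jointRV X A ω) = q ^ r A := by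
  obtain ⟨B, hBA, hB, hBr⟩ := hr.exists_basis A
  rw [prMass_congr fun w => hX.jointRV_basis_eq_iff hr (w := w) hBA hB hBr,
    hX.prMass_jointRV_of_isIndepSet hB, Finset.prod_congr rfl fun e _ => hq e,
    Finset.prod_const, ← hB, hBr]

theorem hasSum_negMulLog_prMass_jointRV (hX : IsRepresentation r p X) (hr : IsRankFunction r)
    {q : ℝ} (hq : ∀ ω, 0 < p ω → ∀ e, prMass p (X e) (X e ω) = q) (A : Finset α) :
    HasSum (fun y => Real.negMulLog (prMass p (jointRV X A) y)) (r A * -Real.log q) := by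
  simpa only [one_mul, Real.log_pow, ← mul_neg] using
    hasSum_negMulLog_prMass_of_uniform hX.nonneg hX.hasSum_one
      fun ω hω => hX.prMass_jointRV_eq_pow hr (hq ω hω) A

end IsRepresentation

theorem statement19_general {α Ω : Type*} [DecidableEq α] {Ωe : α → Type*} {r : Finset α → ℕ}
    {p : Ω → ℝ} {X : ∀ e, Ω → Ωe e} (hr : IsRankFunction r)
    (hconn : ∀ e e', e ≠ e' → ∃ C, IsCircuitSet r C ∧ e ∈ C ∧ e' ∈ C)
    (hrk : ∃ A, 2 ≤ r A) (hX : IsRepresentation r p X) :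
    ∃ lam : ℝ, 0 < lam ∧
      (∀ A, Summable fun y => Real.negMulLog (prMass p (jointRV X A) y)) ∧
      (∀ A, (r A : ℝ) = lam * entropy p (jointRV X A)) := by
  obtain ⟨q, hq0, hq1, hq⟩ := hX.exists_prMass_eq_const hr hconn hrk
  have hlog : 0 < -Real.log q := neg_pos.2 (Real.log_neg hq0 hq1)
  have hsum := hX.hasSum_negMulLog_prMass_jointRV hr hq
  refine ⟨(-Real.log q)⁻¹, inv_pos.2 hlog, fun A => (hsum A).summable, fun A => ?_⟩
  rw [entropy, (hsum A).tsum_eq, mul_left_comm, inv_mul_cancel₀ hlog.ne', mul_one]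

/-- Let `M` be a connected matroid of rank at least two with rank function
`r` on a finite ground set, and let `{X_e}` together with a discrete probability measure
(point masses `p`) be a discrete probability space representation of `M`. Then `M` is
entropic: there is `λ > 0` with `r(A) = λ·H(X_A)` for every `A`, the defining sum of
`H(X_A)` converging for every `A`. -/
theorem statement19 {α : Type*} [Fintype α] [DecidableEq α] (r : Finset α → ℕ)
    (hr_le : ∀ A : Finset α, r A ≤ A.card)
    (hr_mono : ∀ ⦃A B : Finset α⦄, A ⊆ B → r A ≤ r B)
    (hr_submod : ∀ A B : Finset α, r (A ∪ B) + r (A ∩ B) ≤ r A + r B)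
    -- connected: every two distinct elements lie in a common circuit
    (hconn : ∀ e e' : α, e ≠ e' → ∃ C : Finset α,
      (r C ≠ C.card ∧ ∀ D ⊂ C, r D = D.card) ∧ e ∈ C ∧ e' ∈ C)
    -- rank at least two
    (hrk : 2 ≤ r Finset.univ)
    {Ω : Type*} (p : Ω → ℝ) (hp0 : ∀ ω, 0 ≤ p ω) (hp1 : ∑' ω, p ω = 1)
    (Ωe : α → Type*) (X : ∀ e, Ω → Ωe e)
    -- independence
    (hindep : ∀ A : Finset α, r A = A.card → ∀ y : (e : ↥A) → Ωe e.1,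
      prMass p (jointRV X A) y = ∏ e : ↥A, prMass p (X e.1) (y e))
    -- determination
    (hdet : ∀ C : Finset α, r C ≠ C.card → (∀ D ⊂ C, r D = D.card) → ∀ x ∈ C,
      ∃ f : ((e : ↥(C.erase x)) → Ωe e.1) → Ωe x,
        ∀ ω, X x ω = f (jointRV X (C.erase x) ω))
    -- nontriviality
    (hnontriv : ∀ e : α, r {e} ≠ 0 →
      ∃ ω ω', 0 < p ω ∧ 0 < p ω' ∧ X e ω ≠ X e ω') :
    ∃ lam : ℝ, 0 < lam ∧
      (∀ A : Finset α,
        Summable fun y : (e : ↥A) → Ωe e.1 => Real.negMulLog (prMass p (jointRV X A) y)) ∧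
      (∀ A : Finset α, (r A : ℝ) = lam * entropy p (jointRV X A)) := by
  have hp_sum : HasSum p 1 :=
    hp1 ▸ (not_imp_comm.1 tsum_eq_zero_of_not_summable (hp1 ▸ one_ne_zero)).hasSum
  exact statement19_general ⟨hr_le, hr_mono, hr_submod⟩ hconn ⟨_, hrk⟩
    ⟨hp0, hp_sum, hindep, fun C hC => hdet C hC.1 hC.2, hnontriv⟩
end
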